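/- For every ε > 0 there exists K > 0 such that for all k ∈ ℂ with |k| ≥ K and all x ∈ [0,ℓ] one has |c'(x,k) + k sin(kx) − cos(kx)·(1/2)∫₀ˣ q(t) dt − (sin(kx)/k)·[ (1/4)(q(x) + q(0)) + (1/8)(∫₀ˣ q(t) dt)² ]| ≤ ε · e^{|Im k| x} / |k|. -/

import Mathlib

open MeasureTheory intervalIntegral Real

/-!
Put `s = k (c - cos (k x))`, so that `s(x) = ∫₀ˣ sin (k (x - t)) q c` and `c = cos (k x) + s / k`.
Everything is measured against `e ^ (|Im k| x)`, which Volterra operators with kernels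
`sin (k (x - t))` and `cos (k (x - t))` respect. Expanding products of trigonometric functions into
sums leaves a main term and an oscillatory integral `∫₀ˣ φ (k (x - 2t)) f(t) dt`, which is
negligible by the Riemann-Lebesgue lemma. One iteration gives
`s = (1/2) sin (k x) ∫₀ˣ q + o(e ^ (|Im k| x))`. Substituting this into `∫₀ˣ cos (k (x - t)) q c`
yields all the terms but `(1/4) (q(x) + q(0))`, which are the boundary terms of an integration by
parts in `∫₀ˣ cos (k (x - 2t)) q(t) dt`.
-/

section

open Asymptotics Bornology Filter Topology

section IntegralsOfPrimitives

variable {E 𝕜 : Type*} [NormedAddCommGroup E] [RCLike 𝕜] {a b : ℝ}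

theorem intervalIntegrable_of_integrableOn_Ioc {f : ℝ → E} {x : ℝ}
    (hf : IntegrableOn f (Set.Ioc a b)) (hx : x ∈ Set.Icc a b) : IntervalIntegrable f volume a x :=
  (intervalIntegrable_iff_integrableOn_Ioc_of_le hx.1).2
    (hf.mono_set (Set.Ioc_subset_Ioc_right hx.2))

theorem continuousOn_primitive_Icc_of_integrableOn_Ioc [NormedSpace ℝ E] {f : ℝ → E}
    (hf : IntegrableOn f (Set.Ioc a b)) :
    ContinuousOn (fun x => ∫ t in a..x, f t) (Set.Icc a b) :=
  (intervalIntegral.continuousOn_primitive ((integrableOn_Icc_iff_integrableOn_Ioc).2 hf)).congr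
    fun _ hx => integral_of_le hx.1

theorem integrableOn_mul_primitive {f : ℝ → 𝕜} (hf : IntegrableOn f (Set.Ioc a b)) :
    IntegrableOn (fun x => f x * ∫ t in a..x, f t) (Set.Ioc a b) := by
  have hprim := continuousOn_primitive_Icc_of_integrableOn_Ioc hf
  rw [← integrableOn_Icc_iff_integrableOn_Ioc] at hf ⊢
  exact hf.mul_continuousOn hprim isCompact_Icc

theorem integral_mul_integral_eq_integral_integral_mul {f g : ℝ → 𝕜} (hab : a ≤ b)
    (hf : IntervalIntegrable f volume a b) (hg : IntervalIntegrable g volume a b) :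
    ∫ t in a..b, g t * ∫ s in a..t, f s = ∫ s in a..b, (∫ t in s..b, g t) * f s := by
  rw [intervalIntegrable_iff_integrableOn_Ioc_of_le hab] at hf hg
  set μ := volume.restrict (Set.Ioc a b)
  let T : Set (ℝ × ℝ) := {p | p.2 ≤ p.1}
  have hT : MeasurableSet T := measurableSet_le measurable_snd measurable_fst
  let F : ℝ → ℝ → 𝕜 := fun t s => T.indicator (fun p => g p.1 * f p.2) (t, s)
  have hF : Integrable (Function.uncurry F) (μ.prod μ) := (hg.mul_prod hf).indicator hT
  have inner_left : ∀ t ∈ Set.Ioc a b, g t * ∫ s in a..t, f s = ∫ s, F t s ∂μ := by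
    intro t ht
    have hFt : F t = (Set.Iic t).indicator fun s => g t * f s := rfl
    rw [hFt, MeasureTheory.integral_indicator measurableSet_Iic,
      Measure.restrict_restrict measurableSet_Iic,
      Set.inter_comm, Set.Ioc_inter_Iic, min_eq_right ht.2, integral_of_le ht.1.le,
      MeasureTheory.integral_const_mul]
  have inner_right : ∀ s ∈ Set.Ioc a b, (∫ t in s..b, g t) * f s = ∫ t, F t s ∂μ := by
    intro s hs
    have hFs : (fun t => F t s) = (Set.Ici s).indicator fun t => g t * f s := rfl
    have hset : Set.Ici s ∩ Set.Ioc a b = Set.Icc s b := by grind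
    rw [hFs, MeasureTheory.integral_indicator measurableSet_Ici,
      Measure.restrict_restrict measurableSet_Ici,
      hset, integral_Icc_eq_integral_Ioc, integral_of_le hs.2, MeasureTheory.integral_mul_const]
  rw [integral_of_le hab, integral_of_le hab, setIntegral_congr_fun measurableSet_Ioc inner_left,
    setIntegral_congr_fun measurableSet_Ioc inner_right, integral_integral_swap hF]

theorem integral_mul_primitive_self {f : ℝ → 𝕜} (hab : a ≤ b)
    (hf : IntervalIntegrable f volume a b) :
    ∫ t in a..b, f t * ∫ s in a..t, f s = (∫ t in a..b, f t) ^ 2 / 2 := by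
  have hprim : ContinuousOn (fun t => ∫ s in a..t, f s) (Set.uIcc a b) :=
    continuousOn_primitive_interval' hf Set.left_mem_uIcc
  have hsplit : ∀ s ∈ Set.uIcc a b,
      (∫ t in s..b, f t) * f s = (∫ t in a..b, f t) * f s - f s * ∫ t in a..s, f t := by
    intro s hs
    have has : IntervalIntegrable f volume a s :=
      hf.mono_set (Set.uIcc_subset_uIcc_left hs)
    rw [← integral_interval_sub_left hf has]
    ring
  have hfubini := integral_mul_integral_eq_integral_integral_mul hab hf hf
  rw [integral_congr hsplit, integral_sub (hf.const_mul _) (hf.mul_continuousOn hprim),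
    intervalIntegral.integral_const_mul] at hfubini
  linear_combination hfubini / 2

end IntegralsOfPrimitives

open scoped ContDiff in
theorem exists_contDiff_hasCompactSupport_integral_norm_sub_le {E F : Type*}
    [NormedAddCommGroup E] [NormedSpace ℝ E] [FiniteDimensional ℝ E] [MeasurableSpace E]
    [BorelSpace E] [NormedAddCommGroup F] [NormedSpace ℝ F] {μ : Measure E}
    [IsFiniteMeasureOnCompacts μ] {f : E → F} (hf : Integrable f μ) {ε : ℝ} (hε : 0 < ε) :
    ∃ g : E → F, HasCompactSupport g ∧ ContDiff ℝ ∞ g ∧ ∫ x, ‖f x - g x‖ ∂μ ≤ ε := by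
  obtain ⟨g, hgsupp, hgsmooth, hfg⟩ := MemLp.exist_eLpNorm_sub_le ENNReal.one_ne_top le_rfl
    (memLp_one_iff_integrable.2 hf) hε
  have hg : Integrable g μ := hgsmooth.continuous.integrable_of_hasCompactSupport hgsupp
  refine ⟨g, hgsupp, hgsmooth, ?_⟩
  rw [eLpNorm_one_eq_lintegral_enorm] at hfg
  have hnorm := integral_norm_eq_lintegral_enorm (hf.sub hg).aestronglyMeasurable
  exact hnorm.trans_le (ENNReal.toReal_le_of_le_ofReal hε.le hfg)

/-- The filter of pairs `(k, x)` along which `k → ∞` in `ℂ`, uniformly in `x ∈ [0, ℓ]`. -/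
noncomputable def spectralFilter (ℓ : ℝ) : Filter (ℂ × ℝ) :=
  cobounded ℂ ×ˢ principal (Set.Icc 0 ℓ)

theorem eventually_spectralFilter {ℓ : ℝ} {P : ℂ × ℝ → Prop} :
    (∀ᶠ p in spectralFilter ℓ, P p) ↔
      ∀ᶠ k in cobounded ℂ, ∀ x ∈ Set.Icc 0 ℓ, P (k, x) :=
  eventually_prod_principal_iff

theorem eventually_spectralFilter_of_ne_zero {ℓ : ℝ} {P : ℂ × ℝ → Prop}
    (h : ∀ k ≠ 0, ∀ x ∈ Set.Icc 0 ℓ, P (k, x)) : ∀ᶠ p in spectralFilter ℓ, P p :=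
  eventually_spectralFilter.2 ((eventually_ne_cobounded 0).mono h)

theorem tendsto_inv_fst_spectralFilter (ℓ : ℝ) :
    Tendsto (fun p : ℂ × ℝ => p.1⁻¹) (spectralFilter ℓ) (𝓝 0) :=
  tendsto_inv₀_cobounded.comp tendsto_fst

/-- The growth `e ^ (|Im k| x)` of `sin (k x)` and `cos (k x)`, against which all solutions are
measured. -/
noncomputable def expWeight (p : ℂ × ℝ) : ℝ :=
  Real.exp (|p.1.im| * p.2)

theorem expWeight_pos (p : ℂ × ℝ) : 0 < expWeight p :=
  Real.exp_pos _

theorem norm_expWeight (p : ℂ × ℝ) : ‖expWeight p‖ = expWeight p :=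
  Real.norm_of_nonneg (expWeight_pos p).le

theorem expWeight_sub_mul (k : ℂ) (x t : ℝ) :
    expWeight (k, x - t) * expWeight (k, t) = expWeight (k, x) := by
  rw [expWeight, expWeight, expWeight, ← Real.exp_add]
  ring_nf

theorem inv_mul_isLittleO_expWeight {ℓ : ℝ} {u : ℂ × ℝ → ℂ}
    (hu : u =O[spectralFilter ℓ] expWeight) :
    (fun p => p.1⁻¹ * u p) =o[spectralFilter ℓ] expWeight := by
  simpa using ((isLittleO_one_iff ℝ).2 (tendsto_inv_fst_spectralFilter ℓ)).mul_isBigO hu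

/-- `φ` is dominated by `z ↦ e ^ |Im z|`; this holds for `sin` and `cos`. -/
def IsExpBounded (φ : ℂ → ℂ) : Prop :=
  ∀ z, ‖φ z‖ ≤ Real.exp |z.im|

theorem norm_exp_mul_I_le (z : ℂ) : ‖Complex.exp (z * Complex.I)‖ ≤ Real.exp |z.im| := by
  rw [Complex.norm_exp, Complex.mul_I_re]
  exact Real.exp_le_exp.2 (neg_le_abs _)

theorem norm_exp_neg_mul_I_le (z : ℂ) : ‖Complex.exp (-z * Complex.I)‖ ≤ Real.exp |z.im| := by
  simpa using norm_exp_mul_I_le (-z)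

theorem isExpBounded_sin : IsExpBounded Complex.sin := by
  intro z
  have h := norm_sub_le (Complex.exp (-z * Complex.I)) (Complex.exp (z * Complex.I))
  rw [Complex.sin, norm_div, norm_mul, Complex.norm_I, Complex.norm_two]
  linarith [norm_exp_mul_I_le z, norm_exp_neg_mul_I_le z]

theorem isExpBounded_cos : IsExpBounded Complex.cos := by
  intro z
  have h := norm_add_le (Complex.exp (z * Complex.I)) (Complex.exp (-z * Complex.I))
  rw [Complex.cos, norm_div, Complex.norm_two]
  linarith [norm_exp_mul_I_le z, norm_exp_neg_mul_I_le z]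

theorem IsExpBounded.norm_mul_ofReal_le {φ : ℂ → ℂ} (hφ : IsExpBounded φ) (k : ℂ) {x u : ℝ}
    (hu : |u| ≤ x) : ‖φ (k * u)‖ ≤ expWeight (k, x) := by
  refine (hφ _).trans (Real.exp_le_exp.2 ?_)
  rw [Complex.im_mul_ofReal, abs_mul]
  gcongr

/-- The Volterra operator with kernel `φ (k (x - t))` and potential `q`, acting on functions of
`(k, x)`. -/
noncomputable def volterra (φ : ℂ → ℂ) (q : ℝ → ℂ) (u : ℂ × ℝ → ℂ) (p : ℂ × ℝ) : ℂ :=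
  ∫ t in 0..p.2, φ (p.1 * ((p.2 : ℂ) - t)) * (q t * u (p.1, t))

/-- The oscillatory integral `∫₀ˣ φ (k (x - 2t)) f t dt` left over when a product of trigonometric
functions in `volterra` is expanded into a sum. -/
noncomputable def oscIntegral (φ : ℂ → ℂ) (f : ℝ → ℂ) (p : ℂ × ℝ) : ℂ :=
  ∫ t in 0..p.2, φ (p.1 * ((p.2 : ℂ) - 2 * t)) * f t

section Bounds

variable {ℓ x : ℝ} {k : ℂ} {φ : ℂ → ℂ} {f : ℝ → ℂ}

theorem norm_integral_le_mul_setIntegral_norm {g : ℝ → ℂ} {C : ℝ}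
    (hf : IntegrableOn f (Set.Ioc 0 ℓ)) (hx : x ∈ Set.Icc 0 ℓ) (hC : 0 ≤ C)
    (hg : ∀ t ∈ Set.Ioc 0 x, ‖g t‖ ≤ C * ‖f t‖) :
    ‖∫ t in 0..x, g t‖ ≤ C * ∫ t in Set.Ioc 0 ℓ, ‖f t‖ := by
  have hfx := (intervalIntegrable_of_integrableOn_Ioc hf hx).norm
  calc ‖∫ t in 0..x, g t‖
      ≤ ∫ t in 0..x, C * ‖f t‖ :=
        norm_integral_le_of_norm_le hx.1 (Eventually.of_forall hg) (hfx.const_mul C)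
    _ = C * ∫ t in Set.Ioc 0 x, ‖f t‖ := by
        rw [intervalIntegral.integral_const_mul, integral_of_le hx.1]
    _ ≤ C * ∫ t in Set.Ioc 0 ℓ, ‖f t‖ := by
        gcongr
        · exact Eventually.of_forall fun t => norm_nonneg _
        · exact hf.norm
        · exact hx.2

theorem norm_volterra_le {u : ℂ × ℝ → ℂ} {B : ℝ} (hφ : IsExpBounded φ)
    (hf : IntegrableOn f (Set.Ioc 0 ℓ)) (hx : x ∈ Set.Icc 0 ℓ) (hB : 0 ≤ B)
    (hu : ∀ t ∈ Set.Icc 0 ℓ, ‖u (k, t)‖ ≤ B * expWeight (k, t)) :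
    ‖volterra φ f u (k, x)‖ ≤ B * expWeight (k, x) * ∫ t in Set.Ioc 0 ℓ, ‖f t‖ := by
  refine norm_integral_le_mul_setIntegral_norm hf hx (mul_nonneg hB (expWeight_pos _).le) ?_
  intro t ht
  have hkernel : ‖φ (k * ((x : ℂ) - t))‖ ≤ expWeight (k, x - t) := by
    have hxt : |x - t| ≤ x - t := (abs_of_nonneg (sub_nonneg.2 ht.2)).le
    exact_mod_cast hφ.norm_mul_ofReal_le k hxt
  calc ‖φ (k * ((x : ℂ) - t)) * (f t * u (k, t))‖
      = ‖φ (k * ((x : ℂ) - t))‖ * (‖f t‖ * ‖u (k, t)‖) := by rw [norm_mul, norm_mul]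
    _ ≤ expWeight (k, x - t) * (‖f t‖ * (B * expWeight (k, t))) := by
        have := (expWeight_pos (k, x - t)).le
        gcongr
        exact hu t ⟨ht.1.le, ht.2.trans hx.2⟩
    _ = B * expWeight (k, x) * ‖f t‖ := by
        rw [← expWeight_sub_mul k x t]
        ring

theorem norm_oscIntegral_le (hφ : IsExpBounded φ) (hf : IntegrableOn f (Set.Ioc 0 ℓ))
    (hx : x ∈ Set.Icc 0 ℓ) :
    ‖oscIntegral φ f (k, x)‖ ≤ expWeight (k, x) * ∫ t in Set.Ioc 0 ℓ, ‖f t‖ := by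
  refine norm_integral_le_mul_setIntegral_norm hf hx (expWeight_pos _).le fun t ht => ?_
  have hxt : |x - 2 * t| ≤ x := abs_le.2 ⟨by linarith [ht.2], by linarith [ht.1]⟩
  have hphase : ‖φ (k * ((x : ℂ) - 2 * t))‖ ≤ expWeight (k, x) := by
    exact_mod_cast hφ.norm_mul_ofReal_le k hxt
  rw [norm_mul]
  gcongr

theorem volterra_isBigOWith_expWeight {u : ℂ × ℝ → ℂ} {B : ℝ} (hφ : IsExpBounded φ)
    (hf : IntegrableOn f (Set.Ioc 0 ℓ)) (hB : 0 ≤ B)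
    (hu : IsBigOWith B (spectralFilter ℓ) u expWeight) :
    IsBigOWith (B * ∫ t in Set.Ioc 0 ℓ, ‖f t‖) (spectralFilter ℓ)
      (volterra φ f u) expWeight := by
  simp only [isBigOWith_iff, eventually_spectralFilter, norm_expWeight] at hu ⊢
  filter_upwards [hu] with k huk x hx
  exact (norm_volterra_le hφ hf hx hB huk).trans_eq (mul_right_comm _ _ _)

theorem volterra_isBigO_expWeight {u : ℂ × ℝ → ℂ} (hφ : IsExpBounded φ)
    (hf : IntegrableOn f (Set.Ioc 0 ℓ)) (hu : u =O[spectralFilter ℓ] expWeight) :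
    volterra φ f u =O[spectralFilter ℓ] expWeight :=
  let ⟨_, hB, huB⟩ := hu.exists_nonneg
  (volterra_isBigOWith_expWeight hφ hf hB huB).isBigO

theorem volterra_isLittleO_expWeight {u : ℂ × ℝ → ℂ} (hφ : IsExpBounded φ)
    (hf : IntegrableOn f (Set.Ioc 0 ℓ)) (hu : u =o[spectralFilter ℓ] expWeight) :
    volterra φ f u =o[spectralFilter ℓ] expWeight := by
  refine IsLittleO.of_isBigOWith fun ε hε => ?_
  set M := ∫ t in Set.Ioc 0 ℓ, ‖f t‖
  have hM : 0 ≤ M := integral_nonneg fun t => norm_nonneg _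
  have hM1 : 0 < M + 1 := add_pos_of_nonneg_of_pos hM one_pos
  have hB : 0 < ε / (M + 1) := div_pos hε hM1
  have hBM : ε / (M + 1) * M ≤ ε := by
    rw [div_mul_eq_mul_div, div_le_iff₀ hM1]
    gcongr
    exact (lt_add_one M).le
  exact (volterra_isBigOWith_expWeight hφ hf hB.le (hu.forall_isBigOWith hB)).weaken hBM

end Bounds

/-- `q` is absolutely continuous on `[0, ℓ]` with integrable derivative `q'`, encoded by the
fundamental theorem of calculus. -/
structure IsPrimitiveOn (q q' : ℝ → ℂ) (ℓ : ℝ) : Prop where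
  integrableOn_deriv : IntegrableOn q' (Set.Ioc 0 ℓ)
  eq_add_integral : ∀ x ∈ Set.Icc 0 ℓ, q x = q 0 + ∫ t in 0..x, q' t

namespace IsPrimitiveOn

variable {q q' : ℝ → ℂ} {ℓ x : ℝ}

theorem continuousOn (h : IsPrimitiveOn q q' ℓ) : ContinuousOn q (Set.Icc 0 ℓ) :=
  ((continuousOn_primitive_Icc_of_integrableOn_Ioc h.integrableOn_deriv).const_add (q 0)).congr
    h.eq_add_integral

theorem integrableOn (h : IsPrimitiveOn q q' ℓ) : IntegrableOn q (Set.Ioc 0 ℓ) :=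
  h.continuousOn.integrableOn_Icc.mono_set Set.Ioc_subset_Icc_self

theorem norm_le (h : IsPrimitiveOn q q' ℓ) (hx : x ∈ Set.Icc 0 ℓ) :
    ‖q x‖ ≤ ‖q 0‖ + ∫ t in Set.Ioc 0 ℓ, ‖q' t‖ := by
  rw [h.eq_add_integral x hx]
  refine (norm_add_le _ _).trans (add_le_add_right ?_ _)
  simpa using norm_integral_le_mul_setIntegral_norm h.integrableOn_deriv hx zero_le_one (g := q')

theorem of_contDiff (hq : ContDiff ℝ 1 q) (ℓ : ℝ) : IsPrimitiveOn q (deriv q) ℓ where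
  integrableOn_deriv := (hq.continuous_deriv le_rfl).integrableOn_Ioc
  eq_add_integral x _ := by
    rw [integral_deriv_eq_sub (fun t _ => hq.differentiable one_ne_zero t)
      ((hq.continuous_deriv le_rfl).intervalIntegrable 0 x)]
    ring

end IsPrimitiveOn

section Oscillation

variable {ℓ x : ℝ} {k : ℂ} {φ Φ : ℂ → ℂ} {q q' : ℝ → ℂ}

theorem two_mul_integral_comp_mul_sub_two_mul (hΦ : ∀ z, HasDerivAt Φ (φ z) z)
    (hφ : Continuous φ) (k : ℂ) (x s : ℝ) :
    2 * k * ∫ t in s..x, φ (k * ((x : ℂ) - 2 * t)) = Φ (k * ((x : ℂ) - 2 * s)) - Φ (-(k * x)) := by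
  have hderiv : ∀ t : ℝ, HasDerivAt (fun t : ℝ => -Φ (k * ((x : ℂ) - 2 * t)))
      (2 * k * φ (k * ((x : ℂ) - 2 * t))) t := by
    intro t
    have hphase : HasDerivAt (fun z : ℂ => k * ((x : ℂ) - 2 * z)) (k * -(2 * 1)) t :=
      (((hasDerivAt_id (t : ℂ)).const_mul 2).const_sub (x : ℂ)).const_mul k
    exact ((hΦ _).comp (t : ℂ) hphase).comp_ofReal.neg.congr_deriv (by ring)
  have hcont : Continuous fun t : ℝ => 2 * k * φ (k * ((x : ℂ) - 2 * t)) := by fun_prop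
  rw [← intervalIntegral.integral_const_mul,
    integral_eq_sub_of_hasDerivAt (fun t _ => hderiv t) (hcont.intervalIntegrable s x),
    show k * ((x : ℂ) - 2 * x) = -(k * x) by ring]
  ring

theorem two_mul_oscIntegral_of_isPrimitiveOn (hΦ : ∀ z, HasDerivAt Φ (φ z) z)
    (hφ : Continuous φ) (hq : IsPrimitiveOn q q' ℓ) (hx : x ∈ Set.Icc 0 ℓ) (k : ℂ) :
    2 * k * oscIntegral φ q (k, x) =
      Φ (k * x) * q 0 - Φ (-(k * x)) * q x + oscIntegral Φ q' (k, x) := by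
  have hq'x := intervalIntegrable_of_integrableOn_Ioc hq.integrableOn_deriv hx
  have hΦcont : Continuous Φ := continuous_iff_continuousAt.2 fun z => (hΦ z).continuousAt
  have hphase : Continuous fun t : ℝ => φ (k * ((x : ℂ) - 2 * t)) := by fun_prop
  have hPhase : Continuous fun t : ℝ => Φ (k * ((x : ℂ) - 2 * t)) := by fun_prop
  have hprim : ContinuousOn (fun t => ∫ s in 0..t, q' s) (Set.uIcc 0 x) :=
    continuousOn_primitive_interval' hq'x Set.left_mem_uIcc
  have hsplit : oscIntegral φ q (k, x) = (∫ t in 0..x, φ (k * ((x : ℂ) - 2 * t))) * q 0 +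
      ∫ t in 0..x, φ (k * ((x : ℂ) - 2 * t)) * ∫ s in 0..t, q' s := by
    have hright : IntervalIntegrable
        (fun t => φ (k * ((x : ℂ) - 2 * t)) * ∫ s in 0..t, q' s) volume 0 x :=
      (hphase.continuousOn.mul hprim).intervalIntegrable
    rw [oscIntegral, ← intervalIntegral.integral_mul_const,
      ← intervalIntegral.integral_add ((hphase.intervalIntegrable 0 x).mul_const _) hright]
    refine integral_congr fun t ht => ?_
    rw [Set.uIcc_of_le hx.1] at ht
    simp only [hq.eq_add_integral t ⟨ht.1, ht.2.trans hx.2⟩]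
    ring
  have hfubini : 2 * k * ∫ t in 0..x, φ (k * ((x : ℂ) - 2 * t)) * ∫ s in 0..t, q' s =
      oscIntegral Φ q' (k, x) - Φ (-(k * x)) * ∫ s in 0..x, q' s := by
    rw [integral_mul_integral_eq_integral_integral_mul hx.1 hq'x (hphase.intervalIntegrable 0 x),
      oscIntegral, ← intervalIntegral.integral_const_mul, ← intervalIntegral.integral_const_mul,
      ← intervalIntegral.integral_sub (hq'x.continuousOn_mul hPhase.continuousOn)
        (hq'x.const_mul _)]
    simp only [← mul_assoc, two_mul_integral_comp_mul_sub_two_mul hΦ hφ, sub_mul]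
  have hbase := two_mul_integral_comp_mul_sub_two_mul hΦ hφ k x 0
  rw [Complex.ofReal_zero, mul_zero, sub_zero] at hbase
  rw [hsplit, hq.eq_add_integral x hx]
  linear_combination q 0 * hbase + hfubini

theorem norm_mul_oscIntegral_le_of_isPrimitiveOn (hΦ : ∀ z, HasDerivAt Φ (φ z) z)
    (hφ : Continuous φ) (hΦexp : IsExpBounded Φ) (hq : IsPrimitiveOn q q' ℓ)
    (hx : x ∈ Set.Icc 0 ℓ) (k : ℂ) :
    ‖k * oscIntegral φ q (k, x)‖ ≤
      (‖q 0‖ + ∫ t in Set.Ioc 0 ℓ, ‖q' t‖) * expWeight (k, x) := by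
  have hright : ‖Φ (k * x)‖ ≤ expWeight (k, x) :=
    hΦexp.norm_mul_ofReal_le k (abs_of_nonneg hx.1).le
  have hleft : ‖Φ (-(k * x))‖ ≤ expWeight (k, x) := by
    have hneg : |-x| ≤ x := by rw [abs_neg, abs_of_nonneg hx.1]
    simpa using hΦexp.norm_mul_ofReal_le k hneg
  have hosc := norm_oscIntegral_le (k := k) hΦexp hq.integrableOn_deriv hx
  have hqx := hq.norm_le hx
  set M := ∫ t in Set.Ioc 0 ℓ, ‖q' t‖
  have hE := (expWeight_pos (k, x)).le
  have htwo : 2 * ‖k * oscIntegral φ q (k, x)‖ ≤ 2 * ((‖q 0‖ + M) * expWeight (k, x)) :=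
    calc 2 * ‖k * oscIntegral φ q (k, x)‖
        = ‖Φ (k * x) * q 0 - Φ (-(k * x)) * q x + oscIntegral Φ q' (k, x)‖ := by
          rw [← two_mul_oscIntegral_of_isPrimitiveOn hΦ hφ hq hx k, mul_assoc, norm_mul 2,
            Complex.norm_two]
      _ ≤ ‖Φ (k * x)‖ * ‖q 0‖ + ‖Φ (-(k * x))‖ * ‖q x‖ + ‖oscIntegral Φ q' (k, x)‖ := by
          grw [norm_add_le, norm_sub_le, norm_mul, norm_mul]
      _ ≤ expWeight (k, x) * ‖q 0‖ + expWeight (k, x) * (‖q 0‖ + M) + expWeight (k, x) * M := by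
          gcongr
      _ = 2 * ((‖q 0‖ + M) * expWeight (k, x)) := by ring
  linarith

theorem oscIntegral_isLittleO_expWeight_of_isPrimitiveOn (hΦ : ∀ z, HasDerivAt Φ (φ z) z)
    (hφ : Continuous φ) (hΦexp : IsExpBounded Φ) (hq : IsPrimitiveOn q q' ℓ) :
    oscIntegral φ q =o[spectralFilter ℓ] expWeight := by
  have hbounded : (fun p => p.1 * oscIntegral φ q p) =O[spectralFilter ℓ] expWeight := by
    refine IsBigO.of_bound (‖q 0‖ + ∫ t in Set.Ioc 0 ℓ, ‖q' t‖) ?_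
    simp only [norm_expWeight]
    exact eventually_spectralFilter.2 (Eventually.of_forall fun k x hx =>
      norm_mul_oscIntegral_le_of_isPrimitiveOn hΦ hφ hΦexp hq hx k)
  refine (inv_mul_isLittleO_expWeight hbounded).congr' ?_ EventuallyEq.rfl
  exact eventually_spectralFilter_of_ne_zero fun k hk x _ => inv_mul_cancel_left₀ hk _

theorem oscIntegral_sub (hφ : Continuous φ) {f g : ℝ → ℂ} (hf : IntegrableOn f (Set.Ioc 0 ℓ))
    (hg : IntegrableOn g (Set.Ioc 0 ℓ)) (hx : x ∈ Set.Icc 0 ℓ) :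
    oscIntegral φ (f - g) (k, x) = oscIntegral φ f (k, x) - oscIntegral φ g (k, x) := by
  have hphase : Continuous fun t : ℝ => φ (k * ((x : ℂ) - 2 * t)) := by fun_prop
  have hint {h : ℝ → ℂ} (hh : IntegrableOn h (Set.Ioc 0 ℓ)) :
      IntervalIntegrable (fun t => φ (k * ((x : ℂ) - 2 * t)) * h t) volume 0 x :=
    (intervalIntegrable_of_integrableOn_Ioc hh hx).continuousOn_mul hphase.continuousOn
  simp only [oscIntegral]
  rw [← intervalIntegral.integral_sub (hint hf) (hint hg)]
  simp only [Pi.sub_apply, mul_sub]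

/-- A Riemann-Lebesgue lemma: `f` is approximated in `L¹` by smooth functions. -/
theorem oscIntegral_isLittleO_expWeight (hΦ : ∀ z, HasDerivAt Φ (φ z) z) (hφ : Continuous φ)
    (hΦexp : IsExpBounded Φ) (hφexp : IsExpBounded φ) {f : ℝ → ℂ}
    (hf : IntegrableOn f (Set.Ioc 0 ℓ)) :
    oscIntegral φ f =o[spectralFilter ℓ] expWeight := by
  refine IsLittleO.of_bound fun ε hε => ?_
  obtain ⟨g, -, hgsmooth, hfg⟩ :=
    exists_contDiff_hasCompactSupport_integral_norm_sub_le hf (half_pos hε)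
  have hgosc := oscIntegral_isLittleO_expWeight_of_isPrimitiveOn hΦ hφ hΦexp
    (IsPrimitiveOn.of_contDiff (hgsmooth.of_le (by exact_mod_cast le_top)) ℓ)
  have hg : IntegrableOn g (Set.Ioc 0 ℓ) := hgsmooth.continuous.integrableOn_Ioc
  have hgbound := hgosc.bound (half_pos hε)
  simp only [norm_expWeight, eventually_spectralFilter] at hgbound ⊢
  filter_upwards [hgbound] with k hgk x hx
  calc ‖oscIntegral φ f (k, x)‖
      = ‖oscIntegral φ (f - g) (k, x) + oscIntegral φ g (k, x)‖ := by
        rw [oscIntegral_sub hφ hf hg hx, sub_add_cancel]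
    _ ≤ expWeight (k, x) * (∫ t in Set.Ioc 0 ℓ, ‖f t - g t‖) + ε / 2 * expWeight (k, x) :=
        (norm_add_le _ _).trans
          (add_le_add (norm_oscIntegral_le hφexp (hf.sub hg) hx) (hgk x hx))
    _ ≤ expWeight (k, x) * (ε / 2) + ε / 2 * expWeight (k, x) := by
        have := (expWeight_pos (k, x)).le
        gcongr
    _ = ε * expWeight (k, x) := by ring

theorem oscIntegral_sin_isLittleO_expWeight {f : ℝ → ℂ} (hf : IntegrableOn f (Set.Ioc 0 ℓ)) :
    oscIntegral Complex.sin f =o[spectralFilter ℓ] expWeight :=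
  oscIntegral_isLittleO_expWeight (Φ := -Complex.cos)
    (fun z => by simpa using (Complex.hasDerivAt_cos z).neg) Complex.continuous_sin
    (fun z => by simpa using isExpBounded_cos z) isExpBounded_sin hf

end Oscillation

section VolterraAlgebra

variable {ℓ x : ℝ} {k : ℂ} {φ ψ : ℂ → ℂ} {f : ℝ → ℂ} {u v : ℂ × ℝ → ℂ}

theorem intervalIntegrable_volterra (hφ : Continuous φ) (hf : IntegrableOn f (Set.Ioc 0 ℓ))
    (hu : ContinuousOn (fun t => u (k, t)) (Set.Icc 0 ℓ)) (hx : x ∈ Set.Icc 0 ℓ) :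
    IntervalIntegrable (fun t : ℝ => φ (k * ((x : ℂ) - t)) * (f t * u (k, t))) volume 0 x := by
  have hkernel : Continuous fun t : ℝ => φ (k * ((x : ℂ) - t)) := by fun_prop
  have hux : ContinuousOn (fun t => u (k, t)) (Set.uIcc 0 x) := by
    rw [Set.uIcc_of_le hx.1]
    exact hu.mono (Set.Icc_subset_Icc_right hx.2)
  exact ((intervalIntegrable_of_integrableOn_Ioc hf hx).mul_continuousOn hux).continuousOn_mul
    hkernel.continuousOn

theorem volterra_add_const_mul (hφ : Continuous φ) (hf : IntegrableOn f (Set.Ioc 0 ℓ))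
    (hu : ContinuousOn (fun t => u (k, t)) (Set.Icc 0 ℓ))
    (hv : ContinuousOn (fun t => v (k, t)) (Set.Icc 0 ℓ)) (hx : x ∈ Set.Icc 0 ℓ) (a : ℂ) :
    volterra φ f (fun p => u p + a * v p) (k, x) =
      volterra φ f u (k, x) + a * volterra φ f v (k, x) := by
  simp only [volterra]
  rw [← intervalIntegral.integral_const_mul, ← intervalIntegral.integral_add
    (intervalIntegrable_volterra hφ hf hu hx)
    ((intervalIntegrable_volterra hφ hf hv hx).const_mul a)]
  congr with t
  ring

theorem volterra_eq_of_product_to_sum (hψ : Continuous ψ) (hf : IntegrableOn f (Set.Ioc 0 ℓ))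
    (hx : x ∈ Set.Icc 0 ℓ) (σ : ℂ)
    (hprod : ∀ t : ℝ, φ (k * ((x : ℂ) - t)) * u (k, t) =
      (ψ (k * x) + σ * ψ (k * ((x : ℂ) - 2 * t))) / 2) :
    volterra φ f u (k, x) = (ψ (k * x) * (∫ t in 0..x, f t) + σ * oscIntegral ψ f (k, x)) / 2 := by
  have hfx := intervalIntegrable_of_integrableOn_Ioc hf hx
  have hphase : Continuous fun t : ℝ => ψ (k * ((x : ℂ) - 2 * t)) := by fun_prop
  have hosc := (hfx.continuousOn_mul hphase.continuousOn).const_mul σ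
  simp only [volterra, oscIntegral]
  rw [← intervalIntegral.integral_const_mul, ← intervalIntegral.integral_const_mul,
    ← intervalIntegral.integral_add (hfx.const_mul _) hosc, ← intervalIntegral.integral_div]
  congr with t
  linear_combination f t * hprod t

theorem volterra_sin_cos (hf : IntegrableOn f (Set.Ioc 0 ℓ)) (hx : x ∈ Set.Icc 0 ℓ) :
    volterra Complex.sin f (fun p => Complex.cos (p.1 * p.2)) (k, x) =
      (Complex.sin (k * x) * (∫ t in 0..x, f t) + oscIntegral Complex.sin f (k, x)) / 2 := by
  rw [volterra_eq_of_product_to_sum Complex.continuous_sin hf hx 1, one_mul]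
  intro t
  rw [show k * ((x : ℂ) - 2 * t) = k * (x - t) - k * t by ring,
    show k * (x : ℂ) = k * (x - t) + k * t by ring, Complex.sin_add, Complex.sin_sub]
  ring

theorem volterra_cos_cos (hf : IntegrableOn f (Set.Ioc 0 ℓ)) (hx : x ∈ Set.Icc 0 ℓ) :
    volterra Complex.cos f (fun p => Complex.cos (p.1 * p.2)) (k, x) =
      (Complex.cos (k * x) * (∫ t in 0..x, f t) + oscIntegral Complex.cos f (k, x)) / 2 := by
  rw [volterra_eq_of_product_to_sum Complex.continuous_cos hf hx 1, one_mul]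
  intro t
  rw [show k * ((x : ℂ) - 2 * t) = k * (x - t) - k * t by ring,
    show k * (x : ℂ) = k * (x - t) + k * t by ring, Complex.cos_add, Complex.cos_sub]
  ring

theorem volterra_cos_sin (hf : IntegrableOn f (Set.Ioc 0 ℓ)) (hx : x ∈ Set.Icc 0 ℓ) :
    volterra Complex.cos f (fun p => Complex.sin (p.1 * p.2)) (k, x) =
      (Complex.sin (k * x) * (∫ t in 0..x, f t) - oscIntegral Complex.sin f (k, x)) / 2 := by
  rw [volterra_eq_of_product_to_sum Complex.continuous_sin hf hx (-1), neg_one_mul, sub_eq_add_neg]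
  intro t
  rw [show k * ((x : ℂ) - 2 * t) = k * (x - t) - k * t by ring,
    show k * (x : ℂ) = k * (x - t) + k * t by ring, Complex.sin_add, Complex.sin_sub]
  ring

theorem volterra_cos_sin_mul_primitive (hf : IntegrableOn f (Set.Ioc 0 ℓ))
    (hx : x ∈ Set.Icc 0 ℓ) :
    volterra Complex.cos f (fun p => Complex.sin (p.1 * p.2) * ∫ t in 0..p.2, f t) (k, x) =
      (Complex.sin (k * x) * (∫ t in 0..x, f t) ^ 2 / 2 -
        oscIntegral Complex.sin (fun t => f t * ∫ s in 0..t, f s) (k, x)) / 2 := by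
  have hself := integral_mul_primitive_self hx.1 (intervalIntegrable_of_integrableOn_Ioc hf hx)
  rw [mul_div_assoc, ← hself, ← volterra_cos_sin (integrableOn_mul_primitive hf) hx]
  simp only [volterra]
  congr with t
  ring

end VolterraAlgebra

/-- `c (k, ·)` is, for every `k ≠ 0`, the continuous solution on `[0, ℓ]` of the Volterra equation
for `-c'' + q c = k² c` with `c (k, 0) = 1`, `c' (k, 0) = 0`. -/
structure IsCosineSolution (q : ℝ → ℂ) (ℓ : ℝ) (c : ℂ × ℝ → ℂ) : Prop where
  continuousOn : ∀ k ≠ 0, ContinuousOn (fun x => c (k, x)) (Set.Icc 0 ℓ)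
  eq_cos_add : ∀ k ≠ 0, ∀ x ∈ Set.Icc 0 ℓ,
    c (k, x) = Complex.cos (k * x) + k⁻¹ * volterra Complex.sin q c (k, x)

/-- The deviation of `c` from the free solution `cos (k x)`, scaled by `k`. -/
noncomputable def cosDefect (c : ℂ × ℝ → ℂ) (p : ℂ × ℝ) : ℂ :=
  p.1 * (c p - Complex.cos (p.1 * p.2))

/-- What remains of `cosDefect` after its leading term `(1/2) sin (k x) ∫₀ˣ q` is removed. -/
noncomputable def cosRemainder (q : ℝ → ℂ) (c : ℂ × ℝ → ℂ) (p : ℂ × ℝ) : ℂ :=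
  cosDefect c p - 1 / 2 * (Complex.sin (p.1 * p.2) * ∫ t in 0..p.2, q t)

namespace IsCosineSolution

variable {q q' : ℝ → ℂ} {ℓ x : ℝ} {c : ℂ × ℝ → ℂ} {k : ℂ} {φ : ℂ → ℂ}

theorem norm_le (hc : IsCosineSolution q ℓ c) (hq : IntegrableOn q (Set.Ioc 0 ℓ)) (hk : k ≠ 0)
    (hk_large : 2 * ∫ t in Set.Ioc 0 ℓ, ‖q t‖ ≤ ‖k‖) (hx : x ∈ Set.Icc 0 ℓ) :
    ‖c (k, x)‖ ≤ 2 * expWeight (k, x) := by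
  have hcont : ContinuousOn (fun t => ‖c (k, t)‖ / expWeight (k, t)) (Set.Icc 0 ℓ) := by
    refine (hc.continuousOn k hk).norm.div ?_ fun t _ => (expWeight_pos _).ne'
    unfold expWeight
    fun_prop
  obtain ⟨y, hy, hmax⟩ := isCompact_Icc.exists_isMaxOn ⟨x, hx⟩ hcont
  set M := ∫ t in Set.Ioc 0 ℓ, ‖q t‖
  set B := ‖c (k, y)‖ / expWeight (k, y)
  have hB : 0 ≤ B := div_nonneg (norm_nonneg _) (expWeight_pos _).le
  have hcB : ∀ t ∈ Set.Icc 0 ℓ, ‖c (k, t)‖ ≤ B * expWeight (k, t) := fun t ht =>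
    (div_le_iff₀ (expWeight_pos _)).1 (hmax ht)
  have hE := expWeight_pos (k, y)
  have hsmall : ‖k‖⁻¹ * M ≤ 1 / 2 := by
    rw [inv_mul_le_iff₀ (norm_pos_iff.2 hk)]
    linarith
  have hcy : B * expWeight (k, y) ≤ (1 + B / 2) * expWeight (k, y) :=
    calc B * expWeight (k, y) = ‖Complex.cos (k * y) + k⁻¹ * volterra Complex.sin q c (k, y)‖ := by
          rw [← hc.eq_cos_add k hk y hy, div_mul_cancel₀ _ hE.ne']
      _ ≤ ‖Complex.cos (k * y)‖ + ‖k‖⁻¹ * ‖volterra Complex.sin q c (k, y)‖ := by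
          grw [norm_add_le, norm_mul, norm_inv]
      _ ≤ expWeight (k, y) + ‖k‖⁻¹ * (B * expWeight (k, y) * M) := by
          gcongr
          · exact isExpBounded_cos.norm_mul_ofReal_le k (abs_of_nonneg hy.1).le
          · exact norm_volterra_le isExpBounded_sin hq hy hB hcB
      _ = (1 + B * (‖k‖⁻¹ * M)) * expWeight (k, y) := by ring
      _ ≤ (1 + B * (1 / 2)) * expWeight (k, y) := by gcongr
      _ = (1 + B / 2) * expWeight (k, y) := by ring
  have hB2 : B ≤ 2 := by linarith [le_of_mul_le_mul_right hcy hE]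
  exact (hcB x hx).trans (mul_le_mul_of_nonneg_right hB2 (expWeight_pos _).le)

theorem isBigO_expWeight (hc : IsCosineSolution q ℓ c) (hq : IntegrableOn q (Set.Ioc 0 ℓ)) :
    c =O[spectralFilter ℓ] expWeight := by
  refine IsBigO.of_bound 2 ?_
  simp only [norm_expWeight]
  refine eventually_spectralFilter.2 ?_
  filter_upwards [eventually_ne_cobounded 0,
    eventually_cobounded_le_norm (2 * ∫ t in Set.Ioc 0 ℓ, ‖q t‖)] with k hk hk_large x hx
  exact hc.norm_le hq hk hk_large hx

theorem cosDefect_eq_volterra (hc : IsCosineSolution q ℓ c) (hk : k ≠ 0)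
    (hx : x ∈ Set.Icc 0 ℓ) : cosDefect c (k, x) = volterra Complex.sin q c (k, x) := by
  rw [cosDefect, hc.eq_cos_add k hk x hx, add_sub_cancel_left, mul_inv_cancel_left₀ hk]

theorem cosDefect_isBigO_expWeight (hc : IsCosineSolution q ℓ c)
    (hq : IntegrableOn q (Set.Ioc 0 ℓ)) : cosDefect c =O[spectralFilter ℓ] expWeight :=
  (volterra_isBigO_expWeight isExpBounded_sin hq (hc.isBigO_expWeight hq)).congr'
    (eventually_spectralFilter_of_ne_zero fun _ hk _ hx => (hc.cosDefect_eq_volterra hk hx).symm)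
    EventuallyEq.rfl

theorem continuousOn_cosDefect (hc : IsCosineSolution q ℓ c) (hk : k ≠ 0) :
    ContinuousOn (fun x => cosDefect c (k, x)) (Set.Icc 0 ℓ) := by
  have hcos : Continuous fun x : ℝ => Complex.cos (k * x) := by fun_prop
  exact ((hc.continuousOn k hk).sub hcos.continuousOn).const_mul k

theorem volterra_eq_add_volterra_cosDefect (hc : IsCosineSolution q ℓ c) (hφ : Continuous φ)
    (hq : IntegrableOn q (Set.Ioc 0 ℓ)) (hk : k ≠ 0) (hx : x ∈ Set.Icc 0 ℓ) :
    volterra φ q c (k, x) = volterra φ q (fun p => Complex.cos (p.1 * p.2)) (k, x) +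
      k⁻¹ * volterra φ q (cosDefect c) (k, x) := by
  have hcos : Continuous fun x : ℝ => Complex.cos (k * x) := by fun_prop
  rw [← volterra_add_const_mul hφ hq hcos.continuousOn (hc.continuousOn_cosDefect hk) hx]
  simp only [volterra, cosDefect, inv_mul_cancel_left₀ hk, add_sub_cancel]

theorem cosRemainder_isLittleO_expWeight (hc : IsCosineSolution q ℓ c)
    (hq : IntegrableOn q (Set.Ioc 0 ℓ)) :
    cosRemainder q c =o[spectralFilter ℓ] expWeight := by
  have hosc := (oscIntegral_sin_isLittleO_expWeight hq).const_mul_left (1 / 2 : ℂ)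
  have hiter := inv_mul_isLittleO_expWeight
    (volterra_isBigO_expWeight isExpBounded_sin hq (hc.cosDefect_isBigO_expWeight hq))
  refine (hosc.add hiter).congr' ?_ EventuallyEq.rfl
  refine eventually_spectralFilter_of_ne_zero fun k hk x hx => ?_
  simp only [cosRemainder]
  rw [hc.cosDefect_eq_volterra hk hx,
    hc.volterra_eq_add_volterra_cosDefect Complex.continuous_sin hq hk hx, volterra_sin_cos hq hx]
  ring

theorem volterra_cos_cosDefect (hc : IsCosineSolution q ℓ c) (hq : IntegrableOn q (Set.Ioc 0 ℓ))
    (hk : k ≠ 0) (hx : x ∈ Set.Icc 0 ℓ) :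
    volterra Complex.cos q (cosDefect c) (k, x) =
      volterra Complex.cos q (cosRemainder q c) (k, x) +
        1 / 4 * (Complex.sin (k * x) * (∫ t in 0..x, q t) ^ 2 / 2 -
          oscIntegral Complex.sin (fun t => q t * ∫ s in 0..t, q s) (k, x)) := by
  have hsin : Continuous fun x : ℝ => Complex.sin (k * x) := by fun_prop
  have hlead : ContinuousOn (fun x : ℝ => Complex.sin (k * x) * ∫ t in 0..x, q t)
      (Set.Icc 0 ℓ) :=
    hsin.continuousOn.mul (continuousOn_primitive_Icc_of_integrableOn_Ioc hq)
  have hrem : ContinuousOn (fun x => cosRemainder q c (k, x)) (Set.Icc 0 ℓ) :=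
    (hc.continuousOn_cosDefect hk).sub (hlead.const_mul (1 / 2))
  have hsplit : cosDefect c = fun p =>
      cosRemainder q c p + 1 / 2 * (Complex.sin (p.1 * p.2) * ∫ t in 0..p.2, q t) :=
    funext fun p => (sub_add_cancel _ _).symm
  rw [hsplit, volterra_add_const_mul Complex.continuous_cos hq hrem hlead hx,
    volterra_cos_sin_mul_primitive hq hx]
  ring

theorem mul_volterra_cos_sub_eq (hc : IsCosineSolution q ℓ c) (hq : IsPrimitiveOn q q' ℓ)
    (hk : k ≠ 0) (hx : x ∈ Set.Icc 0 ℓ) :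
    k * (volterra Complex.cos q c (k, x) - Complex.cos (k * x) * (1 / 2 * ∫ t in 0..x, q t)) -
        Complex.sin (k * x) * (1 / 4 * (q x + q 0) + 1 / 8 * (∫ t in 0..x, q t) ^ 2) =
      1 / 4 * oscIntegral Complex.sin q' (k, x) -
        1 / 4 * oscIntegral Complex.sin (fun t => q t * ∫ s in 0..t, q s) (k, x) +
        volterra Complex.cos q (cosRemainder q c) (k, x) := by
  have hparts := two_mul_oscIntegral_of_isPrimitiveOn Complex.hasDerivAt_sin
    Complex.continuous_cos hq hx k
  have hcancel := mul_inv_cancel_left₀ hk (volterra Complex.cos q (cosDefect c) (k, x))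
  rw [Complex.sin_neg] at hparts
  rw [hc.volterra_eq_add_volterra_cosDefect Complex.continuous_cos hq.integrableOn hk hx,
    volterra_cos_cos hq.integrableOn hx]
  linear_combination
    hparts / 4 + hcancel + hc.volterra_cos_cosDefect hq.integrableOn hk hx

theorem mul_volterra_cos_sub_isLittleO_expWeight (hc : IsCosineSolution q ℓ c)
    (hq : IsPrimitiveOn q q' ℓ) :
    (fun p => p.1 * (volterra Complex.cos q c p -
          Complex.cos (p.1 * p.2) * (1 / 2 * ∫ t in 0..p.2, q t)) -
        Complex.sin (p.1 * p.2) * (1 / 4 * (q p.2 + q 0) + 1 / 8 * (∫ t in 0..p.2, q t) ^ 2))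
      =o[spectralFilter ℓ] expWeight := by
  have hosc_deriv := oscIntegral_sin_isLittleO_expWeight hq.integrableOn_deriv
  have hosc_mul := oscIntegral_sin_isLittleO_expWeight (integrableOn_mul_primitive hq.integrableOn)
  have hrem := volterra_isLittleO_expWeight isExpBounded_cos hq.integrableOn
    (hc.cosRemainder_isLittleO_expWeight hq.integrableOn)
  refine (((hosc_deriv.const_mul_left (1 / 4)).sub (hosc_mul.const_mul_left (1 / 4))).add
    hrem).congr' ?_ EventuallyEq.rfl
  exact eventually_spectralFilter_of_ne_zero fun k hk x hx =>
    (hc.mul_volterra_cos_sub_eq hq hk hx).symm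

end IsCosineSolution

theorem gelfand_levitan_c_deriv_asymptotics_general
    (ℓ : ℝ) (q q' : ℝ → ℂ) (hq' : IntervalIntegrable q' volume 0 ℓ)
    (hq : ∀ x ∈ Set.Icc (0 : ℝ) ℓ, q x = q 0 + ∫ t in (0 : ℝ)..x, q' t)
    (c cderiv : ℂ → ℝ → ℂ)
    (hccont : ∀ k : ℂ, k ≠ 0 → ContinuousOn (c k) (Set.Icc 0 ℓ))
    (hc : ∀ k : ℂ, k ≠ 0 → ∀ x ∈ Set.Icc (0 : ℝ) ℓ,
      c k x = Complex.cos (k * x) +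
        ∫ t in (0 : ℝ)..x, (Complex.sin (k * ((x : ℂ) - t)) / k) * q t * c k t)
    (hcderiv : ∀ k : ℂ, k ≠ 0 → ∀ x ∈ Set.Icc (0 : ℝ) ℓ,
      cderiv k x = -k * Complex.sin (k * x) +
        ∫ t in (0 : ℝ)..x, Complex.cos (k * ((x : ℂ) - t)) * q t * c k t) :
    ∀ ε > 0, ∃ K > 0, ∀ k : ℂ, K ≤ ‖k‖ → ∀ x ∈ Set.Icc (0 : ℝ) ℓ,
      ‖cderiv k x + k * Complex.sin (k * x)
          - Complex.cos (k * x) * ((1 / 2 : ℂ) * ∫ t in (0 : ℝ)..x, q t)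
          - (Complex.sin (k * x) / k) *
              ((1 / 4 : ℂ) * (q x + q 0) + (1 / 8 : ℂ) * (∫ t in (0 : ℝ)..x, q t) ^ 2)‖
        ≤ ε * Real.exp (|k.im| * x) / ‖k‖ := by
  have hq_prim : IsPrimitiveOn q q' ℓ := ⟨hq'.1, hq⟩
  have hc_sol : IsCosineSolution q ℓ fun p => c p.1 p.2 := by
    refine ⟨hccont, fun k hk x hx => ?_⟩
    simp only [hc k hk x hx, volterra, ← intervalIntegral.integral_const_mul]
    congr with t
    ring
  intro ε hε
  have hbound := (hc_sol.mul_volterra_cos_sub_isLittleO_expWeight hq_prim).bound hε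
  simp only [norm_expWeight, eventually_spectralFilter] at hbound
  obtain ⟨K, -, hK⟩ := hasBasis_cobounded_norm.eventually_iff.1 hbound
  refine ⟨max K 1, by positivity, fun k hk x hx => ?_⟩
  have hk0 : 0 < ‖k‖ := zero_lt_one.trans_le ((le_max_right K 1).trans hk)
  have hk_ne : k ≠ 0 := norm_pos_iff.1 hk0
  have hvolterra : volterra Complex.cos q (fun p => c p.1 p.2) (k, x) =
      cderiv k x + k * Complex.sin (k * x) := by
    simp only [hcderiv k hk_ne x hx, volterra, mul_assoc]
    ring
  rw [le_div_iff₀' hk0, ← norm_mul]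
  have hKk := hK ((le_max_left K 1).trans hk) x hx
  rw [hvolterra] at hKk
  refine (congrArg norm ?_).trans_le hKk
  field_simp

end

/-- Asymptotics of the derivative `c'(·, k)` of the solution `c(·, k)` of the
Volterra integral equation `c(x,k) = cos(kx) + ∫₀ˣ (sin(k(x−t))/k) q(t) c(t,k) dt` on `[0, ℓ]`,
where `c'(x,k) = −k sin(kx) + ∫₀ˣ cos(k(x−t)) q(t) c(t,k) dt` and the potential `q` is
absolutely continuous with derivative `q' ∈ L¹((0,ℓ))`. -/
theorem gelfand_levitan_c_deriv_asymptotics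
    (ℓ : ℝ) (hℓ : 0 < ℓ) (q q' : ℝ → ℝ)
    (hq' : IntervalIntegrable q' volume 0 ℓ)
    (hq : ∀ x ∈ Set.Icc (0 : ℝ) ℓ, q x = q 0 + ∫ t in (0 : ℝ)..x, q' t)
    (c cderiv : ℂ → ℝ → ℂ)
    (hccont : ∀ k : ℂ, k ≠ 0 → ContinuousOn (c k) (Set.Icc 0 ℓ))
    (hc : ∀ k : ℂ, k ≠ 0 → ∀ x ∈ Set.Icc (0 : ℝ) ℓ,
      c k x = Complex.cos (k * x) +
        ∫ t in (0 : ℝ)..x, (Complex.sin (k * ((x : ℂ) - t)) / k) * (q t : ℂ) * c k t)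
    (hcderiv : ∀ k : ℂ, k ≠ 0 → ∀ x ∈ Set.Icc (0 : ℝ) ℓ,
      cderiv k x = -k * Complex.sin (k * x) +
        ∫ t in (0 : ℝ)..x, Complex.cos (k * ((x : ℂ) - t)) * (q t : ℂ) * c k t) :
    ∀ ε > 0, ∃ K > 0, ∀ k : ℂ, K ≤ ‖k‖ → ∀ x ∈ Set.Icc (0 : ℝ) ℓ,
      ‖cderiv k x + k * Complex.sin (k * x)
          - Complex.cos (k * x) * ((1 / 2 : ℂ) * ∫ t in (0 : ℝ)..x, (q t : ℂ))
          - (Complex.sin (k * x) / k) *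
              ((1 / 4 : ℂ) * ((q x : ℂ) + (q 0 : ℂ))
                + (1 / 8 : ℂ) * (∫ t in (0 : ℝ)..x, (q t : ℂ)) ^ 2)‖
        ≤ ε * Real.exp (|k.im| * x) / ‖k‖ := by
  exact gelfand_levitan_c_deriv_asymptotics_general ℓ (fun t => q t) (fun t => q' t)
    ⟨hq'.1.ofReal, hq'.2.ofReal⟩
    (fun x hx => by rw [hq x hx, intervalIntegral.integral_ofReal, Complex.ofReal_add])
    c cderiv hccont hc hcderiv
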